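/- arXiv:1004.2327 — 2 statements merged into one kernel-verified Lean document; each statement's English description precedes it below -/
import Mathlib

section
/- Let q be a prime and n ≥ 1 an integer. Let m_0 ≥ m_1 ≥ m_2 ≥ … ≥ m_{n+1} be integers with m_1 > m_2, and set m := m_1 − m_2 ≥ 1. Let a_1,…,a_n, b, x_1,…,x_n, y ∈ ℤ_q (the q-adic integers) and set w := y − (Σ_{j=1}^n a_j x_j + b) ∈ ℤ_q. Define (n+2)×(n+2) matrices over ℚ_q, with rows and columns indexed 0,…,n+1: α has first row (q^{−m_0}, −q^{−m_0} a_1, …, −q^{−m_0} a_n, −q^{−m_0 − m_1 + m_2} b), diagonal entries q^{−m_{j+1}} in position (j,j) for 1 ≤ j ≤ n, entry q^{−m_1} in position (n+1, n+1), and all other entries 0; β is the identity matrix modified in its last column, with entries q^{−m_1+m_2} y in position (0, n+1) and q^{−m_1+m_2} x_j in position (j, n+1) for 1 ≤ j ≤ n, and 1 in position (n+1, n+1). Then, with |·|_q the q-adic absolute value normalized by |q|_q = 1/q: (i) if w ∈ q^m ℤ_q then max over all entries z of αβ of |z|_q equals q^{m_0}; (ii) if w − q^{m−1} ∈ q^m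 ℤ_q then this maximum equals q^{m_0 + 1}; and in both cases, for every j with 2 ≤ j ≤ n+2, the maximum of |det M|_q over all j×j submatrices M of αβ equals q^{m_0 + m_1 + … + m_{j−1}}. -/
open Matrix Function

/-!
Up to a factor `q^(-m)` common to the last column, the rows `0, …, n + 1` of `αβ` become integral
after multiplication by `q^(m₀), q^(m₂), q^(m₃), …, q^(m_{n+1}), q^(m₂)`. Arranged decreasingly,
these row exponents form the sequence `m₀, m₁, m₂, …` with `m₁` replaced by `m₂ = m₁ - m`.
Expanding a `j × j` minor by the Leibniz formula and using the ultrametric inequality bounds its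
exponent by the sum of the `j` largest row exponents plus one `m`, which is `m₀ + ⋯ + m_{j-1}` as
soon as `j ≥ 2`. The product `αβ` is upper triangular with diagonal exponents
`m₀, m₂, m₃, …, m_{n+1}, m₁`, so principal minors attain the bound.

Only the upper right entry `q^(-m₀-m) w` can exceed `q^(m₀)`, whence the maximal entry.
-/

section Generalities

theorem norm_det_le_prod_mul_prod {R ι : Type*} [NormedCommRing R] [NormOneClass R]
    [IsUltrametricDist R] [Fintype ι] [DecidableEq ι] {M : Matrix ι ι R} {r c : ι → ℝ}
    (h : ∀ i j, ‖M i j‖ ≤ r i * c j) : ‖M.det‖ ≤ (∏ i, r i) * ∏ j, c j := by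
  rw [det_apply]
  refine IsUltrametricDist.norm_sum_le_of_forall_le_of_nonempty Finset.univ_nonempty fun σ _ => ?_
  calc ‖Equiv.Perm.sign σ • ∏ i, M (σ i) i‖ = ‖∏ i, M (σ i) i‖ := by
        rcases Int.units_eq_one_or (Equiv.Perm.sign σ) with hσ | hσ <;> simp [hσ]
    _ ≤ ∏ i, ‖M (σ i) i‖ := Finset.norm_prod_le _ _
    _ ≤ ∏ i, r (σ i) * c i := Finset.prod_le_prod (fun _ _ => norm_nonneg _) fun i _ => h _ _
    _ = (∏ i, r i) * ∏ j, c j := by rw [Finset.prod_mul_distrib, Equiv.prod_comp σ r]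

theorem det_eq_prod_diag_of_blockTriangular_injective {R ι κ : Type*} [CommRing R] [Fintype ι]
    [DecidableEq ι] [LinearOrder κ] {M : Matrix ι ι R} {b : ι → κ} (hb : Injective b)
    (hM : M.BlockTriangular b) : M.det = ∏ i, M i i :=
  letI := LinearOrder.lift' b hb
  det_of_isUpperTriangular fun _ _ hij => hM hij

theorem prod_zpow_eq_zpow_sum {G ι : Type*} [CommGroupWithZero G] {g : G} (hg : g ≠ 0)
    (s : Finset ι) (f : ι → ℤ) : ∏ i ∈ s, g ^ f i = g ^ ∑ i ∈ s, f i := by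
  induction s using Finset.cons_induction with
  | empty => simp
  | cons i s hi ih => rw [Finset.prod_cons, Finset.sum_cons, zpow_add₀ hg, ih]

theorem prod_ite_eq_le_of_injective {ι κ R : Type*} [Fintype ι] [DecidableEq κ] [CommMonoid R]
    [Preorder R] {f : ι → κ} (hf : Injective f) (k : κ) {t : R} (ht : 1 ≤ t) :
    ∏ i, (if f i = k then t else 1) ≤ t := by
  have : ∏ i, (if f i = k then t else 1) = if k ∈ Finset.univ.map ⟨f, hf⟩ then t else 1 := by
    rw [← Finset.prod_ite_eq' _ k fun _ => t, Finset.prod_map, Embedding.coeFn_mk]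
  rw [this]
  split_ifs
  exacts [le_rfl, ht]

theorem sum_le_sum_range_card_of_antitoneOn {M : Type*} [AddCommMonoid M] [Preorder M]
    [AddLeftMono M] {f : ℕ → M} {N : ℕ} (hf : AntitoneOn f (Set.Iio N)) {s : Finset ℕ}
    (hs : ∀ i ∈ s, i < N) : ∑ i ∈ s, f i ≤ ∑ i ∈ Finset.range s.card, f i := by
  induction s using Finset.induction_on_max with
  | empty => simp
  | insert k s hk ih =>
    have hks : k ∉ s := fun h => (hk k h).false
    have hcard : s.card ≤ k := by
      simpa using Finset.card_le_card (t := Finset.range k) fun i hi => Finset.mem_range.2 (hk i hi)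
    have hkN : k < N := hs k (Finset.mem_insert_self k s)
    rw [Finset.sum_insert hks, Finset.card_insert_of_notMem hks, Finset.sum_range_succ, add_comm]
    exact add_le_add (ih fun i hi => hs i (Finset.mem_insert_of_mem hi))
      (hf (hcard.trans_lt hkN) hkN hcard)

theorem sum_comp_le_sum_range_of_antitoneOn {ι M : Type*} [Fintype ι] [AddCommMonoid M]
    [Preorder M] [AddLeftMono M] {f : ℕ → M} {N : ℕ} (hf : AntitoneOn f (Set.Iio N))
    {g : ι → ℕ} (hg : Injective g) (hgN : ∀ i, g i < N) :
    ∑ i, f (g i) ≤ ∑ i ∈ Finset.range (Fintype.card ι), f i := by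
  have hs : ∀ k ∈ Finset.univ.map ⟨g, hg⟩, k < N := by simpa using hgN
  simpa using sum_le_sum_range_card_of_antitoneOn hf hs

theorem antitoneOn_update_one {α : Type*} [Preorder α] {f : ℕ → α} {n : ℕ}
    (hf : ∀ j ≤ n, f (j + 1) ≤ f j) (h21 : f 2 ≤ f 1) :
    AntitoneOn (update f 1 (f 2)) (Set.Iio (n + 2)) := by
  refine antitoneOn_of_add_one_le Set.ordConnected_Iio fun j _ _ hj => ?_
  have hfj : f (j + 1) ≤ f j := hf j (by simpa [Nat.lt_succ_iff] using hj)
  rcases j with _ | _ | j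
  · simpa using h21.trans hfj
  · simp
  · simpa using hfj

theorem sum_range_update_one {M : Type*} [AddCommGroup M] (f : ℕ → M) (b : M) {k : ℕ}
    (hk : 2 ≤ k) :
    ∑ i ∈ Finset.range k, update f 1 b i = ∑ i ∈ Finset.range k, f i - f 1 + b := by
  have h1 : 1 ∈ Finset.range k := Finset.mem_range.2 hk
  rw [Finset.sum_update_of_mem h1, ← Finset.add_sum_erase _ _ h1, Finset.sdiff_singleton_eq_erase]
  abel

end Generalities

/-- The permutation `0 ↦ 0`, `i ↦ i + 1` for `1 ≤ i ≤ n`, and `n + 1 ↦ 1`. The `i`-th diagonal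
entry of `αβ` is `q^(-e (pivotPerm n i))`. -/
def pivotPerm (n : ℕ) : Equiv.Perm (Fin (n + 2)) :=
  Equiv.Perm.decomposeFin.symm (0, finRotate (n + 1))

theorem pivotPerm_zero (n : ℕ) : pivotPerm n 0 = 0 :=
  Equiv.Perm.decomposeFin_symm_apply_zero _ _

theorem pivotPerm_last (n : ℕ) : pivotPerm n (Fin.last (n + 1)) = 1 := by
  rw [pivotPerm, ← Fin.succ_last, Equiv.Perm.decomposeFin_symm_apply_succ, finRotate_last]
  simp

theorem coe_pivotPerm_of_ne {n : ℕ} {i : Fin (n + 2)} (h0 : i ≠ 0) (hl : i ≠ Fin.last (n + 1)) :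
    (pivotPerm n i : ℕ) = i + 1 := by
  obtain ⟨i, rfl⟩ := Fin.exists_succ_eq_of_ne_zero h0
  have hi : i ≠ Fin.last n := by rwa [← Fin.succ_last, ne_eq, Fin.succ_inj] at hl
  rw [pivotPerm, Equiv.Perm.decomposeFin_symm_apply_succ, Equiv.swap_self, Equiv.refl_apply,
    Fin.val_succ, coe_finRotate_of_ne_last hi, Fin.val_succ]

/-- The rows and columns of an extremal minor of `αβ`: those whose diagonal entries are
`q^(-e 0), …, q^(-e (k-1))`, in this order. -/
def pivotSelection {n k : ℕ} (hk : k ≤ n + 2) : Fin k → Fin (n + 2) :=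
  (pivotPerm n).symm ∘ Fin.castLE hk

theorem pivotSelection_injective {n k : ℕ} (hk : k ≤ n + 2) : Injective (pivotSelection hk) :=
  (pivotPerm n).symm.injective.comp (Fin.castLE_injective hk)

theorem coe_pivotPerm_pivotSelection {n k : ℕ} (hk : k ≤ n + 2) (i : Fin k) :
    (pivotPerm n (pivotSelection hk i) : ℕ) = i := by
  simp [pivotSelection]

/-- The exponent by which row `i` of `αβ` is rescaled: `m₂` for the last row and
`e (pivotPerm n i)` for the others. The sequence `update e 1 (e 2)` lists these exponents in
decreasing order, and `pivotPerm` gives the place of each row in this list. -/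
def rowExponent (n : ℕ) (e : ℕ → ℤ) (i : Fin (n + 2)) : ℤ :=
  update e 1 (e 2) (pivotPerm n i)

theorem rowExponent_last (n : ℕ) (e : ℕ → ℤ) : rowExponent n e (Fin.last (n + 1)) = e 2 := by
  simp [rowExponent, pivotPerm_last]

theorem rowExponent_of_ne_last {n : ℕ} (e : ℕ → ℤ) {i : Fin (n + 2)} (hi : i ≠ Fin.last (n + 1)) :
    rowExponent n e i = e (pivotPerm n i) := by
  refine update_of_ne (fun h => hi ((pivotPerm n).injective ?_)) _ _
  rw [pivotPerm_last]
  exact Fin.ext h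

theorem rowExponent_zero (n : ℕ) (e : ℕ → ℤ) : rowExponent n e 0 = e 0 := by
  rw [rowExponent_of_ne_last e Fin.last_pos.ne, pivotPerm_zero, Fin.val_zero]

section

variable {n : ℕ} {e : ℕ → ℤ}

theorem rowExponent_le_apply_zero (he : ∀ j ≤ n, e (j + 1) ≤ e j) (h21 : e 2 ≤ e 1)
    (i : Fin (n + 2)) : rowExponent n e i ≤ e 0 := by
  simpa [rowExponent] using
    antitoneOn_update_one he h21 (Nat.succ_pos _) (pivotPerm n i).isLt (Nat.zero_le _)

theorem rowExponent_le_apply_two (he : ∀ j ≤ n, e (j + 1) ≤ e j) (h21 : e 2 ≤ e 1)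
    {i : Fin (n + 2)} (hi : i ≠ 0) : rowExponent n e i ≤ e 2 := by
  have hpos : 1 ≤ (pivotPerm n i : ℕ) := by
    rwa [Nat.one_le_iff_ne_zero, Fin.val_ne_zero_iff, ← pivotPerm_zero n,
      (pivotPerm n).injective.ne_iff]
  simpa [rowExponent] using
    antitoneOn_update_one he h21 (Nat.one_lt_succ_succ n) (pivotPerm n i).isLt hpos

theorem sum_rowExponent_le (he : ∀ j ≤ n, e (j + 1) ≤ e j) (h21 : e 2 ≤ e 1) {k : ℕ} (hk : 2 ≤ k)
    {r : Fin k → Fin (n + 2)} (hr : Injective r) :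
    ∑ i, rowExponent n e (r i) ≤ ∑ i ∈ Finset.range k, e i - e 1 + e 2 := by
  have hinj : Injective fun i => (pivotPerm n (r i) : ℕ) :=
    Fin.val_injective.comp ((pivotPerm n).injective.comp hr)
  simpa [rowExponent, sum_range_update_one e (e 2) hk] using
    sum_comp_le_sum_range_of_antitoneOn (antitoneOn_update_one he h21) hinj fun i =>
      (pivotPerm n (r i)).isLt

end

section Product

variable {K : Type*} [Field K] (n : ℕ) (π : K) (e : ℕ → ℤ) (a x : ℕ → K) (b y : K)

/-- The matrix `α` of the theorem over a field `K`, with `π : K` in place of `q`. -/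
def leftFactor : Matrix (Fin (n + 2)) (Fin (n + 2)) K :=
  Matrix.of fun i j =>
    if i = 0 then
      (if j = 0 then π ^ (-(e 0))
       else if j = Fin.last (n + 1) then -π ^ (-(e 0) - e 1 + e 2) * b
       else -π ^ (-(e 0)) * a j.val)
    else if j = i then
      (if i = Fin.last (n + 1) then π ^ (-(e 1)) else π ^ (-(e (i.val + 1))))
    else 0

/-- The matrix `β` of the theorem over a field `K`, with `π : K` in place of `q`. -/
def rightFactor : Matrix (Fin (n + 2)) (Fin (n + 2)) K :=
  Matrix.of fun i j =>
    if j = Fin.last (n + 1) then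
      (if i = Fin.last (n + 1) then 1
       else if i = 0 then π ^ (-(e 1) + e 2) * y
       else π ^ (-(e 1) + e 2) * x i.val)
    else if i = j then 1 else 0

/-- The quantity `w` of the theorem: the amount by which the affine equation
`y = ∑ a_j x_j + b` fails. -/
def affineDefect : K := y - ((∑ j ∈ Finset.Icc 1 n, a j * x j) + b)

/-- The matrix `αβ` of the theorem. -/
def productMatrix : Matrix (Fin (n + 2)) (Fin (n + 2)) K :=
  leftFactor n π e a b * rightFactor n π e x y

variable {n π e a x b y}

theorem leftFactor_apply_self (i : Fin (n + 2)) :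
    leftFactor n π e a b i i = π ^ (-e (pivotPerm n i)) := by
  by_cases h0 : i = 0
  · simp [leftFactor, h0, pivotPerm_zero]
  by_cases hl : i = Fin.last (n + 1)
  · simp [leftFactor, hl, pivotPerm_last]
  · simp [leftFactor, h0, hl, coe_pivotPerm_of_ne h0 hl]

theorem leftFactor_apply_eq_zero {i j : Fin (n + 2)} (hi : i ≠ 0) (hij : i ≠ j) :
    leftFactor n π e a b i j = 0 := by
  simp [leftFactor, hi, hij.symm]

theorem productMatrix_apply_of_ne_last (i : Fin (n + 2)) {j : Fin (n + 2)}
    (hj : j ≠ Fin.last (n + 1)) :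
    productMatrix n π e a x b y i j = leftFactor n π e a b i j := by
  simp [productMatrix, Matrix.mul_apply, rightFactor, hj]

theorem productMatrix_apply_of_ne_zero {i : Fin (n + 2)} (hi : i ≠ 0) (j : Fin (n + 2)) :
    productMatrix n π e a x b y i j =
      π ^ (-e (pivotPerm n i)) * rightFactor n π e x y i j := by
  rw [productMatrix, Matrix.mul_apply, Finset.sum_eq_single i, leftFactor_apply_self]
  · intro k _ hki
    rw [leftFactor_apply_eq_zero hi hki.symm, zero_mul]
  · simp

theorem productMatrix_apply_zero_last (hπ : π ≠ 0) :
    productMatrix n π e a x b y 0 (Fin.last (n + 1)) =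
      π ^ (-e 0 - e 1 + e 2) * affineDefect n a x b y := by
  have h0 : (0 : Fin (n + 2)) ≠ Fin.last (n + 1) := Fin.last_pos.ne
  have hexp : π ^ (-e 0 - e 1 + e 2) = π ^ (-e 0) * π ^ (-e 1 + e 2) := by
    rw [← zpow_add₀ hπ]
    ring_nf
  have hfirst : leftFactor n π e a b 0 0 * rightFactor n π e x y 0 (Fin.last (n + 1)) =
      π ^ (-e 0 - e 1 + e 2) * y := by
    simp [leftFactor, rightFactor, h0, hexp, mul_assoc]
  have hmid (k : Fin n) : leftFactor n π e a b 0 k.succ.castSucc *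
      rightFactor n π e x y k.succ.castSucc (Fin.last (n + 1)) =
      π ^ (-e 0 - e 1 + e 2) * -(a (k + 1) * x (k + 1)) := by
    simp only [leftFactor, rightFactor, hexp, of_apply, ↓reduceIte, Fin.castSucc_succ,
      Fin.succ_ne_zero, Fin.succ_eq_last_succ, Fin.castSucc_ne_last, Fin.val_succ, Fin.val_castSucc]
    ring
  have hlast : leftFactor n π e a b 0 (Fin.last (n + 1)) *
      rightFactor n π e x y (Fin.last (n + 1)) (Fin.last (n + 1)) =
      π ^ (-e 0 - e 1 + e 2) * -b := by
    simp [leftFactor, rightFactor, h0.symm]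
  have hsum : ∑ j ∈ Finset.Icc 1 n, a j * x j = ∑ k : Fin n, a (k + 1) * x (k + 1) := by
    rw [Fin.sum_univ_eq_sum_range (fun k => a (k + 1) * x (k + 1)), Finset.range_eq_Ico,
      Finset.sum_Ico_add' (fun k => a k * x k) 0 n 1]
    rfl
  rw [productMatrix, Matrix.mul_apply, Fin.sum_univ_castSucc, Fin.sum_univ_succ, Fin.castSucc_zero,
    hfirst, hlast, Finset.sum_congr rfl fun k _ => hmid k, ← Finset.mul_sum, Finset.sum_neg_distrib,
    affineDefect, hsum]
  ring

theorem productMatrix_apply_self (i : Fin (n + 2)) :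
    productMatrix n π e a x b y i i = π ^ (-e (pivotPerm n i)) := by
  by_cases hi : i = Fin.last (n + 1)
  · rw [productMatrix_apply_of_ne_zero (hi ▸ Fin.last_pos.ne')]
    simp [rightFactor, hi]
  · rw [productMatrix_apply_of_ne_last i hi, leftFactor_apply_self]

theorem productMatrix_blockTriangular :
    (productMatrix n π e a x b y).BlockTriangular id := by
  intro i j hji
  change j < i at hji
  rw [productMatrix_apply_of_ne_last i (hji.trans_le (Fin.le_last i)).ne]
  exact leftFactor_apply_eq_zero ((Fin.zero_le j).trans_lt hji).ne' hji.ne'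

theorem det_productMatrix_submatrix_pivotSelection (hπ : π ≠ 0) {k : ℕ} (hk : k ≤ n + 2) :
    ((productMatrix n π e a x b y).submatrix (pivotSelection hk) (pivotSelection hk)).det =
      π ^ (-∑ i ∈ Finset.range k, e i) := by
  have htri : ((productMatrix n π e a x b y).submatrix (pivotSelection hk)
      (pivotSelection hk)).BlockTriangular (pivotSelection hk) :=
    productMatrix_blockTriangular.submatrix
  rw [det_eq_prod_diag_of_blockTriangular_injective (pivotSelection_injective hk) htri]
  simp only [submatrix_apply, productMatrix_apply_self, coe_pivotPerm_pivotSelection]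
  rw [← Finset.prod_range fun i => π ^ (-e i), prod_zpow_eq_zpow_sum hπ, Finset.sum_neg_distrib]

end Product

section Norm

variable {K : Type*} [NormedField K] {n : ℕ} {π : K} {e : ℕ → ℤ} {a x : ℕ → K} {b y : K}

theorem norm_leftFactor_apply_le (ha : ∀ j, ‖a j‖ ≤ 1) (i : Fin (n + 2)) {j : Fin (n + 2)}
    (hj : j ≠ Fin.last (n + 1)) : ‖leftFactor n π e a b i j‖ ≤ ‖π‖ ^ (-rowExponent n e i) := by
  rcases eq_or_ne i j with rfl | hij
  · rw [leftFactor_apply_self, norm_zpow, rowExponent_of_ne_last e hj]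
  rcases eq_or_ne i 0 with rfl | hi
  · have hentry : leftFactor n π e a b 0 j = -π ^ (-e 0) * a j := by
      simp [leftFactor, hij.symm, hj]
    rw [hentry, norm_mul, norm_neg, norm_zpow, rowExponent_zero]
    exact mul_le_of_le_one_right (by positivity) (ha j)
  · rw [leftFactor_apply_eq_zero hi hij, norm_zero]
    positivity

theorem norm_productMatrix_apply_last_le (hπ : π ≠ 0) (hx : ∀ j, ‖x j‖ ≤ 1)
    (hw : ‖affineDefect n a x b y‖ ≤ 1) (i : Fin (n + 2)) :
    ‖productMatrix n π e a x b y i (Fin.last (n + 1))‖ ≤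
      ‖π‖ ^ (-rowExponent n e i - e 1 + e 2) := by
  rcases eq_or_ne i 0 with rfl | h0
  · rw [productMatrix_apply_zero_last hπ, norm_mul, norm_zpow, rowExponent_zero]
    exact mul_le_of_le_one_right (by positivity) hw
  rcases eq_or_ne i (Fin.last (n + 1)) with rfl | hl
  · have hexp : -e 2 - e 1 + e 2 = -e 1 := by ring
    rw [productMatrix_apply_self, pivotPerm_last, norm_zpow, rowExponent_last, hexp, Fin.val_one]
  · have hentry : rightFactor n π e x y i (Fin.last (n + 1)) = π ^ (-e 1 + e 2) * x i := by
      simp [rightFactor, h0, hl]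
    rw [productMatrix_apply_of_ne_zero h0, hentry, ← mul_assoc, ← zpow_add₀ hπ, norm_mul, norm_zpow,
      rowExponent_of_ne_last e hl, ← add_assoc, ← sub_eq_add_neg]
    exact mul_le_of_le_one_right (by positivity) (hx i)

theorem norm_productMatrix_apply_le (hπ : π ≠ 0) (ha : ∀ j, ‖a j‖ ≤ 1) (hx : ∀ j, ‖x j‖ ≤ 1)
    (hw : ‖affineDefect n a x b y‖ ≤ 1) (i j : Fin (n + 2)) :
    ‖productMatrix n π e a x b y i j‖ ≤
      ‖π‖ ^ (-rowExponent n e i) * if j = Fin.last (n + 1) then ‖π‖ ^ (-e 1 + e 2) else 1 := by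
  split_ifs with hj
  · rw [← zpow_add₀ (norm_ne_zero_iff.2 hπ), ← add_assoc, ← sub_eq_add_neg, hj]
    exact norm_productMatrix_apply_last_le hπ hx hw i
  · rw [mul_one, productMatrix_apply_of_ne_last i hj]
    exact norm_leftFactor_apply_le ha i hj

theorem isGreatest_norm_productMatrix_apply (hπ0 : π ≠ 0) (hπ1 : ‖π‖ ≤ 1)
    (he : ∀ j ≤ n, e (j + 1) ≤ e j) (h21 : e 2 ≤ e 1) (ha : ∀ j, ‖a j‖ ≤ 1) (hx : ∀ j, ‖x j‖ ≤ 1)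
    (hw : ‖affineDefect n a x b y‖ ≤ 1) :
    IsGreatest {t | ∃ i j, t = ‖productMatrix n π e a x b y i j‖}
      (max (‖π‖ ^ (-e 0)) (‖π‖ ^ (-e 0 - e 1 + e 2) * ‖affineDefect n a x b y‖)) := by
  have hπ : 0 < ‖π‖ := norm_pos_iff.2 hπ0
  have hpivot : ‖productMatrix n π e a x b y 0 0‖ = ‖π‖ ^ (-e 0) := by
    rw [productMatrix_apply_self, norm_zpow, pivotPerm_zero, Fin.val_zero]
  have hcorner : ‖productMatrix n π e a x b y 0 (Fin.last (n + 1))‖ =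
      ‖π‖ ^ (-e 0 - e 1 + e 2) * ‖affineDefect n a x b y‖ := by
    rw [productMatrix_apply_zero_last hπ0, norm_mul, norm_zpow]
  constructor
  · rcases max_choice (‖π‖ ^ (-e 0)) (‖π‖ ^ (-e 0 - e 1 + e 2) * ‖affineDefect n a x b y‖)
      with h | h <;> rw [h]
    exacts [⟨0, 0, hpivot.symm⟩, ⟨0, Fin.last (n + 1), hcorner.symm⟩]
  · rintro _ ⟨i, j, rfl⟩
    rcases ne_or_eq j (Fin.last (n + 1)) with hj | rfl
    · rw [productMatrix_apply_of_ne_last i hj]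
      refine le_max_of_le_left ((norm_leftFactor_apply_le ha i hj).trans ?_)
      exact zpow_le_zpow_right_of_le_one₀ hπ hπ1 (neg_le_neg (rowExponent_le_apply_zero he h21 i))
    rcases eq_or_ne i 0 with rfl | hi
    · exact hcorner.trans_le (le_max_right _ _)
    · refine le_max_of_le_left ((norm_productMatrix_apply_last_le hπ0 hx hw i).trans ?_)
      have h2 := rowExponent_le_apply_two he h21 hi
      have h10 : e 1 ≤ e 0 := he 0 n.zero_le
      exact zpow_le_zpow_right_of_le_one₀ hπ hπ1 (by linarith)

theorem norm_minor_productMatrix_le [IsUltrametricDist K] (hπ0 : π ≠ 0) (hπ1 : ‖π‖ ≤ 1)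
    (he : ∀ j ≤ n, e (j + 1) ≤ e j) (h21 : e 2 ≤ e 1) (ha : ∀ j, ‖a j‖ ≤ 1) (hx : ∀ j, ‖x j‖ ≤ 1)
    (hw : ‖affineDefect n a x b y‖ ≤ 1) {k : ℕ} (hk : 2 ≤ k) {r c : Fin k → Fin (n + 2)}
    (hr : Injective r) (hc : Injective c) :
    ‖((productMatrix n π e a x b y).submatrix r c).det‖ ≤
      ‖π‖ ^ (-∑ i ∈ Finset.range k, e i) := by
  have hπ : 0 < ‖π‖ := norm_pos_iff.2 hπ0
  have hscale : 1 ≤ ‖π‖ ^ (-e 1 + e 2) := one_le_zpow_of_nonpos₀ hπ hπ1 (by linarith)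
  have hsum := sum_rowExponent_le he h21 hk hr
  calc _ ≤ (∏ i, ‖π‖ ^ (-rowExponent n e (r i))) *
        ∏ j, if c j = Fin.last (n + 1) then ‖π‖ ^ (-e 1 + e 2) else 1 :=
      norm_det_le_prod_mul_prod fun i j => norm_productMatrix_apply_le hπ0 ha hx hw (r i) (c j)
    _ ≤ ‖π‖ ^ (∑ i, -rowExponent n e (r i)) * ‖π‖ ^ (-e 1 + e 2) := by
      rw [prod_zpow_eq_zpow_sum hπ.ne']
      gcongr
      exact prod_ite_eq_le_of_injective hc _ hscale
    _ = ‖π‖ ^ (-∑ i, rowExponent n e (r i) - e 1 + e 2) := by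
      rw [← zpow_add₀ hπ.ne', Finset.sum_neg_distrib]
      ring_nf
    _ ≤ ‖π‖ ^ (-∑ i ∈ Finset.range k, e i) :=
      zpow_le_zpow_right_of_le_one₀ hπ hπ1 (by linarith)

end Norm

theorem statement9_general {K : Type*} [NormedField K] [IsUltrametricDist K] {π : K} (hπ0 : π ≠ 0)
    (hπ1 : ‖π‖ ≤ 1) {n : ℕ} {e : ℕ → ℤ} (he : ∀ j ≤ n, e (j + 1) ≤ e j) (h21 : e 2 ≤ e 1)
    {a x : ℕ → K} {b y : K} (ha : ∀ j, ‖a j‖ ≤ 1) (hx : ∀ j, ‖x j‖ ≤ 1)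
    (hw : ‖affineDefect n a x b y‖ ≤ 1) :
    IsGreatest {t | ∃ i j, t = ‖productMatrix n π e a x b y i j‖}
      (max (‖π‖ ^ (-e 0)) (‖π‖ ^ (-e 0 - e 1 + e 2) * ‖affineDefect n a x b y‖)) ∧
    ∀ k, 2 ≤ k → k ≤ n + 2 →
      IsGreatest
        {t | ∃ r c : Fin k → Fin (n + 2), Injective r ∧ Injective c ∧
          t = ‖((productMatrix n π e a x b y).submatrix r c).det‖}
        (‖π‖ ^ (-∑ i ∈ Finset.range k, e i)) := by
  refine ⟨isGreatest_norm_productMatrix_apply hπ0 hπ1 he h21 ha hx hw, fun k hk hkn => ⟨?_, ?_⟩⟩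
  · refine ⟨_, _, pivotSelection_injective hkn, pivotSelection_injective hkn, ?_⟩
    rw [det_productMatrix_submatrix_pivotSelection hπ0, norm_zpow]
  · rintro _ ⟨r, c, hr, hc, rfl⟩
    exact norm_minor_productMatrix_le hπ0 hπ1 he h21 ha hx hw hk hr hc

section Padic

variable {p : ℕ} [Fact p.Prime] {w : ℤ_[p]} {k : ℕ}

theorem norm_le_zpow_of_pow_dvd (h : (p : ℤ_[p]) ^ k ∣ w) : ‖w‖ ≤ (p : ℝ) ^ (-k : ℤ) :=
  (PadicInt.norm_le_pow_iff_mem_span_pow _ _).2 (Ideal.mem_span_singleton.2 h)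

theorem norm_eq_zpow_of_pow_dvd_sub_pow (h : (p : ℤ_[p]) ^ (k + 1) ∣ w - (p : ℤ_[p]) ^ k) :
    ‖w‖ = (p : ℝ) ^ (-k : ℤ) := by
  have hp : (1 : ℝ) < p := mod_cast (Fact.out : p.Prime).one_lt
  have hlt : ‖w - (p : ℤ_[p]) ^ k‖ < ‖(p : ℤ_[p]) ^ k‖ := by
    rw [PadicInt.norm_p_pow]
    exact (norm_le_zpow_of_pow_dvd h).trans_lt (zpow_lt_zpow_right₀ hp (by omega))
  rw [← PadicInt.norm_p_pow, ← sub_add_cancel w ((p : ℤ_[p]) ^ k),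
    PadicInt.norm_add_eq_max_of_ne hlt.ne, max_eq_right hlt.le]

theorem max_zpow_mul_norm_of_pow_dvd (z : ℤ) (h : (p : ℤ_[p]) ^ k ∣ w) :
    max ((p : ℝ) ^ z) ((p : ℝ) ^ (z + k) * ‖w‖) = (p : ℝ) ^ z := by
  have hp : (0 : ℝ) < p := mod_cast (Fact.out : p.Prime).pos
  refine max_eq_left ?_
  calc (p : ℝ) ^ (z + k) * ‖w‖ ≤ (p : ℝ) ^ (z + k) * (p : ℝ) ^ (-k : ℤ) := by
        gcongr
        exact norm_le_zpow_of_pow_dvd h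
    _ = (p : ℝ) ^ z := by rw [← zpow_add₀ hp.ne', add_neg_cancel_right]

theorem max_zpow_mul_norm_of_pow_dvd_sub_pow (z : ℤ)
    (h : (p : ℤ_[p]) ^ (k + 1) ∣ w - (p : ℤ_[p]) ^ k) :
    max ((p : ℝ) ^ z) ((p : ℝ) ^ (z + (k + 1 : ℕ)) * ‖w‖) = (p : ℝ) ^ (z + 1) := by
  have hp : (1 : ℝ) < p := mod_cast (Fact.out : p.Prime).one_lt
  have hexp : z + (k + 1 : ℕ) + -k = z + 1 := by omega
  rw [norm_eq_zpow_of_pow_dvd_sub_pow h, ← zpow_add₀ (zero_lt_one.trans hp).ne', hexp]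
  exact max_eq_right (zpow_le_zpow_right₀ hp.le (by omega))

end Padic

theorem statement9 (q : ℕ) [Fact q.Prime] (n : ℕ) (hn : 1 ≤ n)
    -- the exponents m₀ ≥ m₁ ≥ … ≥ m_{n+1}, here `e 0, e 1, …, e (n+1)`, with m₁ > m₂
    (e : ℕ → ℤ) (he : ∀ j, j ≤ n → e (j + 1) ≤ e j) (h12 : e 2 < e 1)
    -- m := m₁ - m₂ ≥ 1
    (m : ℕ) (hm : 1 ≤ m) (hme : e 1 = e 2 + m)
    (a x : ℕ → ℤ_[q]) (b y : ℤ_[q])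
    (w : ℤ_[q]) (hw : w = y - ((∑ j ∈ Finset.Icc 1 n, a j * x j) + b))
    (α β : Matrix (Fin (n + 2)) (Fin (n + 2)) ℚ_[q])
    (hα : α = Matrix.of fun i j =>
      if i = 0 then
        (if j = 0 then (q : ℚ_[q]) ^ (-(e 0))
         else if j = Fin.last (n + 1) then -(q : ℚ_[q]) ^ (-(e 0) - e 1 + e 2) * (b : ℚ_[q])
         else -(q : ℚ_[q]) ^ (-(e 0)) * (a j.val : ℚ_[q]))
      else if j = i then
        (if i = Fin.last (n + 1) then (q : ℚ_[q]) ^ (-(e 1))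
         else (q : ℚ_[q]) ^ (-(e (i.val + 1))))
      else 0)
    (hβ : β = Matrix.of fun i j =>
      if j = Fin.last (n + 1) then
        (if i = Fin.last (n + 1) then 1
         else if i = 0 then (q : ℚ_[q]) ^ (-(e 1) + e 2) * (y : ℚ_[q])
         else (q : ℚ_[q]) ^ (-(e 1) + e 2) * (x i.val : ℚ_[q]))
      else if i = j then 1 else 0) :
    -- (i)
    ((∃ z : ℤ_[q], w = (q : ℤ_[q]) ^ m * z) →
        IsGreatest {t : ℝ | ∃ i j, t = ‖(α * β) i j‖} ((q : ℝ) ^ (e 0))) ∧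
    -- (ii)
    ((∃ z : ℤ_[q], w - (q : ℤ_[q]) ^ (m - 1) = (q : ℤ_[q]) ^ m * z) →
        IsGreatest {t : ℝ | ∃ i j, t = ‖(α * β) i j‖} ((q : ℝ) ^ (e 0 + 1))) ∧
    -- in both cases, the maximal absolute value of a `jj × jj` minor, `2 ≤ jj ≤ n + 2`,
    -- is `q^(m₀ + m₁ + ⋯ + m_{jj-1})`
    (((∃ z : ℤ_[q], w = (q : ℤ_[q]) ^ m * z) ∨
        (∃ z : ℤ_[q], w - (q : ℤ_[q]) ^ (m - 1) = (q : ℤ_[q]) ^ m * z)) →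
      ∀ jj : ℕ, 2 ≤ jj → jj ≤ n + 2 →
        IsGreatest
          {t : ℝ | ∃ rsel csel : Fin jj → Fin (n + 2),
            Injective rsel ∧ Injective csel ∧
            t = ‖((α * β).submatrix rsel csel).det‖}
          ((q : ℝ) ^ (∑ i ∈ Finset.range jj, e i))) := by
  have hw' : affineDefect n (fun j => (a j : ℚ_[q])) (fun j => (x j : ℚ_[q])) b y = w := by
    simp [affineDefect, hw]
  have hq (z : ℤ) : ‖(q : ℚ_[q])‖ ^ (-z) = (q : ℝ) ^ z := by
    rw [← norm_zpow, Padic.norm_p_zpow, neg_neg]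
  have hq0 : (q : ℚ_[q]) ≠ 0 := mod_cast (Fact.out : q.Prime).ne_zero
  have hexp : -e 0 - e 1 + e 2 = -(e 0 + m) := by omega
  obtain ⟨hentry, hminor⟩ := statement9_general hq0 Padic.norm_p_lt_one.le he h12.le
    (fun j => (a j).norm_le_one) (fun j => (x j).norm_le_one)
    (by rw [hw']; exact w.norm_le_one)
  rw [hw', hexp, hq, hq, PadicInt.padic_norm_e_of_padicInt] at hentry
  have hαβ : α * β = productMatrix n (q : ℚ_[q]) e (fun j => a j) (fun j => x j) b y := by
    rw [hα, hβ]; rfl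
  rw [hαβ]
  obtain ⟨k, rfl⟩ := Nat.exists_eq_add_of_le' hm
  refine ⟨fun h => ?_, fun h => ?_, fun _ j hj hjn => hq _ ▸ hminor j hj hjn⟩
  · rwa [max_zpow_mul_norm_of_pow_dvd _ h] at hentry
  · rwa [max_zpow_mul_norm_of_pow_dvd_sub_pow (k := k) _ h] at hentry
end

section
/- Let q be a prime and n ≥ 1 an integer. Let m_0 ≥ m_1 ≥ m_2 ≥ … ≥ m_{n+1} be integers with m_1 > m_2, and set m := m_1 − m_2 ≥ 1. Let a_1,…,a_n, b, x_1,…,x_n, y ∈ ℤ_q (the q-adic integers) and set w := y − (Σ_{j=1}^n a_j x_j + b) ∈ ℤ_q. Define (n+2)×(n+2) matrices α and β over ℚ_q as follows, with rows and columns indexed 0,…,n+1: α has first row (q^{−m_0}, −q^{−m_0} a_1, …, −q^{−m_0} a_n, −q^{−m_0 − m_1 + m_2} b), diagonal entries q^{−m_{j+1}} in position (j,j) for 1 ≤ j ≤ n, entry q^{−m_1} in position (n+1, n+1), and all other entries 0; β is the identity matrix modified in its last column, with entries q^{−m_1+m_2} y in position (0, n+1) and q^{−m_1+m_2} x_j in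 position (j, n+1) for 1 ≤ j ≤ n, and 1 in position (n+1, n+1). Then: (i) if w ∈ q^m ℤ_q, there exist k_1, k_2 ∈ GL_{n+2}(ℤ_q) such that αβ = k_1 D k_2 with D the diagonal matrix diag(q^{−m_0}, q^{−m_1}, q^{−m_2}, …, q^{−m_{n+1}}); (ii) if w − q^{m−1} ∈ q^m ℤ_q, there exist k_1, k_2 ∈ GL_{n+2}(ℤ_q) such that αβ = k_1 D' k_2 with D' the diagonal matrix diag(q^{−m_0−1}, q^{−m_1+1}, q^{−m_2}, …, q^{−m_{n+1}}). -/
/-!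
Let `E` be the matrix unit at the corner `(0, n + 1)`. Up to the order of its diagonal entries,
`α = diag(q^{-m_j}) * (1 + X - q^{-m} b E)` and `β = 1 + Y + q^{-m} y E`, where `X` is an integral
row vector placed in row `0` and `Y` is `q^{-m}` times an integral column vector placed in the last
column. Since `Y * X = 0` and `X * Y` is a multiple of `E`, the Heisenberg relation
`(1 + X) * (1 + Y) = (1 + Y) * (1 + X * Y) * (1 + X)` gives
`α * β = diag(q^{-m_j}) * (1 + Y) * (1 + q^{-m} w E) * (1 + X)`. The factor `1 + X` is integral, and
so is the conjugate of `1 + Y` by the diagonal matrix, because `m_j ≤ m₂` for `j ≥ 2`. This leaves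
`diag(q^{-m_j}) * (1 + q^{-m} w E)`.

In case (i) the transvection `1 + q^{-m} w E` is integral. In case (ii) its coefficient is `u / q`
with `u` a unit, and the Bruhat decomposition of `!![1, u / q; 0, 1]`, conjugated by the diagonal
matrix, moves one factor `q` from the last diagonal entry to the first.
-/

open Matrix

section Map

variable {ι R K : Type*} [DecidableEq ι] [CommRing R] [CommRing K]

lemma map_permMatrix (f : R →+* K) (σ : Equiv.Perm ι) :
    (σ.permMatrix R).map f = σ.permMatrix K :=
  PEquiv.map_toMatrix f _

lemma map_transvection (f : R →+* K) (i l : ι) (z : R) :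
    (transvection i l z).map f = transvection i l (f z) := by
  simp [transvection, Matrix.map_add, Matrix.map_one]

lemma map_one_add_vecMulVec (f : R →+* K) (u v : ι → R) :
    (1 + vecMulVec u v).map f = 1 + vecMulVec (f ∘ u) (f ∘ v) := by
  ext; simp [vecMulVec_apply, Matrix.one_apply, apply_ite f]

lemma comp_mulSingle_mul_mulSingle {M N F : Type*} [MulOneClass M] [MulOneClass N] [FunLike F M N]
    [MonoidHomClass F M N] (f : F) (i l : ι) (x y : M) :
    f ∘ (Pi.mulSingle i x * Pi.mulSingle l y) = Pi.mulSingle i (f x) * Pi.mulSingle l (f y) := by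
  ext; simp [Pi.mulSingle_apply, apply_ite f]

end Map

section IntegralEquivalence

variable {ι R K : Type*} [Fintype ι] [DecidableEq ι] [CommRing R] [CommRing K] [Algebra R K]

variable (R) in
/-- Two matrices over an `R`-algebra `K` are integrally equivalent if they lie in the same double
coset of `GL(R)`. Invertibility over `R` is expressed by the determinant being a unit. -/
def IntegrallyEquiv (A B : Matrix ι ι K) : Prop :=
  ∃ k₁ k₂ : Matrix ι ι R, IsUnit k₁.det ∧ IsUnit k₂.det ∧
    A = k₁.map (algebraMap R K) * B * k₂.map (algebraMap R K)

lemma IntegrallyEquiv.trans {A B C : Matrix ι ι K} (hAB : IntegrallyEquiv R A B)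
    (hBC : IntegrallyEquiv R B C) : IntegrallyEquiv R A C := by
  obtain ⟨k₁, k₂, hk₁, hk₂, rfl⟩ := hAB
  obtain ⟨l₁, l₂, hl₁, hl₂, rfl⟩ := hBC
  refine ⟨k₁ * l₁, l₂ * k₂, ?_, ?_, ?_⟩
  · simpa only [det_mul] using hk₁.mul hl₁
  · simpa only [det_mul] using hl₂.mul hk₂
  · simp only [Matrix.map_mul, Matrix.mul_assoc]

lemma isUnit_det_permMatrix (σ : Equiv.Perm ι) : IsUnit (σ.permMatrix R).det := by
  rw [det_permutation]
  exact (Units.isUnit _).map (Int.castRingHom R)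

lemma integrallyEquiv_submatrix_perm (A : Matrix ι ι K) (σ τ : Equiv.Perm ι) :
    IntegrallyEquiv R (A.submatrix σ τ) A := by
  refine ⟨σ.permMatrix R, τ⁻¹.permMatrix R, isUnit_det_permMatrix σ, isUnit_det_permMatrix τ⁻¹, ?_⟩
  rw [map_permMatrix, map_permMatrix, Equiv.Perm.permMatrix, Equiv.Perm.permMatrix,
    PEquiv.toMatrix_toPEquiv_mul, PEquiv.mul_toMatrix_toPEquiv]
  rfl

lemma integrallyEquiv_diagonal_comp_perm (d : ι → K) (σ : Equiv.Perm ι) :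
    IntegrallyEquiv R (diagonal (d ∘ σ)) (diagonal d) := by
  rw [← submatrix_diagonal_equiv]
  exact integrallyEquiv_submatrix_perm _ σ σ

end IntegralEquivalence

section Transvections

variable {ι K : Type*} [Fintype ι] [DecidableEq ι] [CommRing K] {i l : ι}

lemma det_one_add_vecMulVec (u v : ι → K) : (1 + vecMulVec u v).det = 1 + v ⬝ᵥ u := by
  rw [vecMulVec_eq Unit, det_one_add_replicateCol_mul_replicateRow]

lemma diagonal_mul_one_add_vecMulVec_single {δ c s : ι → K} (h : ∀ j, δ j * c j = s j * δ l) :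
    diagonal δ * (1 + vecMulVec c (Pi.single l 1)) =
      (1 + vecMulVec s (Pi.single l 1)) * diagonal δ := by
  ext a b
  rw [diagonal_mul, mul_diagonal, Matrix.add_apply, Matrix.add_apply, vecMulVec_apply,
    vecMulVec_apply, Matrix.one_apply, Pi.single_apply]
  grind

lemma diagonal_mul_transvection {δ : ι → K} {x z : K} (h : δ i * x = z * δ l) :
    diagonal δ * transvection i l x = transvection i l z * diagonal δ := by
  ext a b
  rw [diagonal_mul, mul_diagonal, transvection, transvection, Matrix.add_apply, Matrix.add_apply,
    Matrix.one_apply, single_apply, single_apply]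
  grind

/-- The Heisenberg relation: the column times the row vanishes, and the row times the column is a
multiple of the corner matrix unit. -/
lemma one_add_row_mul_one_add_col (hil : i ≠ l) {r c : ι → K} (hr : r i = 0) (hc : c l = 0)
    (ρ γ : K) :
    (1 + vecMulVec (Pi.single i 1) (r + Pi.single l ρ)) *
        (1 + vecMulVec (c + Pi.single i γ) (Pi.single l 1)) =
      (1 + vecMulVec c (Pi.single l 1)) * transvection i l (ρ + γ + r ⬝ᵥ c) *
        (1 + vecMulVec (Pi.single i 1) r) := by
  have corner (t : K) :
      Matrix.single i l t = t • vecMulVec (Pi.single i 1) (Pi.single l 1) := by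
    rw [← single_eq_single_vecMulVec_single, smul_single, smul_eq_mul, mul_one]
  have single_smul (j : ι) (t : K) : (Pi.single j t : ι → K) = t • Pi.single j 1 := by
    rw [← Pi.single_smul, smul_eq_mul, mul_one]
  rw [single_smul l ρ, single_smul i γ]
  simp only [transvection, corner]
  simp only [vecMulVec_add, vecMulVec_smul, add_vecMulVec, smul_vecMulVec, mul_add, mul_one,
    add_mul, one_mul, vecMulVec_mul_vecMulVec, Algebra.smul_mul_assoc, Algebra.mul_smul_comm,
    single_dotProduct, dotProduct_single, hr, hc, Pi.single_eq_of_ne hil, mul_zero, zero_smul,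
    vecMulVec_zero, smul_zero, add_zero, add_smul]
  abel

/-- The Bruhat decomposition of `!![1, x; 0, 1]`. The Borel subgroup is the lower triangular one
because its elements stay integral when conjugated past `diag(q^{-m_j})`. -/
lemma transvection_eq_lower_mul_diagonal_mul_swap_mul_lower (hil : i ≠ l) {x y : K}
    (hxy : x * y = 1) :
    transvection i l x =
      transvection l i y * diagonal (Pi.mulSingle i x * Pi.mulSingle l (-y)) *
        (Equiv.swap i l).permMatrix K * transvection l i y := by
  set D : ι → K := Pi.mulSingle i x * Pi.mulSingle l (-y) with hD
  have hDi : D i = x := by simp [hD, hil]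
  have hDl : D l = -y := by simp [hD, hil.symm]
  ext a b
  rw [Matrix.mul_assoc, Matrix.mul_assoc, Equiv.Perm.permMatrix, PEquiv.toMatrix_toPEquiv_mul]
  rcases eq_or_ne a l with rfl | hal
  · rw [transvection_mul_apply_same, diagonal_mul, diagonal_mul, submatrix_apply, submatrix_apply,
      Equiv.swap_apply_right, Equiv.swap_apply_left, hDi, hDl]
    simp only [transvection, Matrix.add_apply, Matrix.one_apply, single_apply, id]
    grind
  · rw [transvection_mul_apply_of_ne _ _ _ _ hal, diagonal_mul, submatrix_apply]
    rcases eq_or_ne a i with rfl | hai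
    · rw [Equiv.swap_apply_left, hDi]
      simp only [transvection, Matrix.add_apply, Matrix.one_apply, single_apply, id]
      grind
    · simp [hD, transvection, Equiv.swap_apply_of_ne_of_ne, hai, hai.symm, hal, hal.symm]

end Transvections

section Corner

variable {ι R K : Type*} [Fintype ι] [DecidableEq ι] [CommRing R] [CommRing K] [Algebra R K]
  {i l : ι} {δ : ι → K}

lemma integrallyEquiv_diagonal_mul_transvection_algebraMap (hil : i ≠ l) (δ : ι → K) (z : R) :
    IntegrallyEquiv R (diagonal δ * transvection i l (algebraMap R K z)) (diagonal δ) :=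
  ⟨1, transvection i l z, by simp, by simp [det_transvection_of_ne _ _ hil],
    by simp [map_transvection, Matrix.map_one]⟩

lemma integrallyEquiv_diagonal_mul_row_mul_col (hil : i ≠ l) {a s : ι → R} {c : ι → K}
    (ha : a i = 0) (hs : s l = 0) (hc : c l = 0)
    (hδ : ∀ j, δ j * c j = algebraMap R K (s j) * δ l) (ρ γ : K) :
    IntegrallyEquiv R
      (diagonal δ * ((1 + vecMulVec (Pi.single i 1) (algebraMap R K ∘ a + Pi.single l ρ)) *
        (1 + vecMulVec (c + Pi.single i γ) (Pi.single l 1))))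
      (diagonal δ * transvection i l (ρ + γ + (algebraMap R K ∘ a) ⬝ᵥ c)) := by
  refine ⟨1 + vecMulVec s (Pi.single l 1), 1 + vecMulVec (Pi.single i 1) a, ?_, ?_, ?_⟩
  · simp [det_one_add_vecMulVec, hs]
  · simp [det_one_add_vecMulVec, ha]
  · have map_single (j : ι) : algebraMap R K ∘ Pi.single j 1 = Pi.single j 1 := by
      ext; simp [Pi.single_apply, apply_ite (algebraMap R K)]
    rw [one_add_row_mul_one_add_col hil (by simp [ha]) hc, map_one_add_vecMulVec,
      map_one_add_vecMulVec, map_single, map_single, ← Matrix.mul_assoc, ← Matrix.mul_assoc,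
      ← Matrix.mul_assoc, diagonal_mul_one_add_vecMulVec_single hδ]
    rfl

lemma integrallyEquiv_diagonal_mul_transvection_unit_mul (hil : i ≠ l) {ϖ τ u : R} {ϖ' : K}
    (hϖ : algebraMap R K ϖ * ϖ' = 1) (hτ : δ l = algebraMap R K τ * δ i) (hu : IsUnit u) :
    IntegrallyEquiv R (diagonal δ * transvection i l (algebraMap R K u * ϖ'))
      (diagonal (δ * (Pi.mulSingle i ϖ' * Pi.mulSingle l (algebraMap R K ϖ)))) := by
  obtain ⟨v, huv⟩ := hu.exists_right_inv
  have huv' : algebraMap R K u * algebraMap R K v = 1 := by rw [← map_mul, huv, map_one]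
  have bruhat := transvection_eq_lower_mul_diagonal_mul_swap_mul_lower hil
    (x := algebraMap R K u * ϖ') (y := algebraMap R K (v * ϖ)) (by
      rw [map_mul]
      linear_combination hϖ + algebraMap R K ϖ * ϖ' * huv')
  have lower : diagonal δ * transvection l i (algebraMap R K (v * ϖ)) =
      transvection l i (algebraMap R K (τ * (v * ϖ))) * diagonal δ :=
    diagonal_mul_transvection (by rw [hτ, map_mul _ τ]; ring)
  have split : diagonal δ * diagonal (Pi.mulSingle i (algebraMap R K u * ϖ') *
        Pi.mulSingle l (-algebraMap R K (v * ϖ))) =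
      diagonal (δ * (Pi.mulSingle i ϖ' * Pi.mulSingle l (algebraMap R K ϖ))) *
        diagonal (algebraMap R K ∘ (Pi.mulSingle i u * Pi.mulSingle l (-v))) := by
    rw [comp_mulSingle_mul_mulSingle, diagonal_mul_diagonal', diagonal_mul_diagonal']
    change diagonal (δ * _) = diagonal (δ * _ * _)
    rw [mul_assoc, mul_mul_mul_comm, ← Pi.mulSingle_mul, ← Pi.mulSingle_mul, mul_comm ϖ',
      map_neg, mul_neg, ← map_mul, mul_comm ϖ]
  refine ⟨transvection l i (τ * (v * ϖ)),
    diagonal (Pi.mulSingle i u * Pi.mulSingle l (-v)) * (Equiv.swap i l).permMatrix R *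
      transvection l i (v * ϖ), ?_, ?_, ?_⟩
  · simp [det_transvection_of_ne _ _ hil.symm]
  · rw [det_mul, det_mul, det_transvection_of_ne _ _ hil.symm, mul_one, det_diagonal]
    refine .mul ?_ (isUnit_det_permMatrix _)
    simp [Finset.prod_mul_distrib, huv]
  · rw [Matrix.map_mul, Matrix.map_mul, map_transvection, map_transvection, map_permMatrix,
      diagonal_map (map_zero _), bruhat]
    simp only [← Matrix.mul_assoc]
    rw [lower, Matrix.mul_assoc _ (diagonal δ), split]
    simp only [← Matrix.mul_assoc]
    rfl

end Corner

section BorderedMatrices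

variable {n : ℕ}

/-- The vector with entries `f 1, …, f n` in positions `1, …, n`, and `0` in the first and in the
last position. -/
def midVector {M : Type*} [Zero M] (n : ℕ) (f : ℕ → M) : Fin (n + 2) → M :=
  fun j ↦ if j = 0 ∨ j = Fin.last (n + 1) then 0 else f j

lemma midVector_zero {M : Type*} [Zero M] (f : ℕ → M) : midVector n f 0 = 0 := by
  simp [midVector]

lemma midVector_last {M : Type*} [Zero M] (f : ℕ → M) :
    midVector n f (Fin.last (n + 1)) = 0 := by
  simp [midVector]

lemma comp_midVector {M N F : Type*} [Zero M] [Zero N] [FunLike F M N]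
    [ZeroHomClass F M N] (f : F) (a : ℕ → M) : f ∘ midVector n a = midVector n (f ∘ a) := by
  ext; simp [midVector, apply_ite f]

lemma midVector_dotProduct_midVector {K : Type*} [NonUnitalNonAssocSemiring K] (f g : ℕ → K) :
    midVector n f ⬝ᵥ midVector n g = ∑ j ∈ Finset.Icc 1 n, f j * g j := by
  have hmid (k : Fin n) (f : ℕ → K) : midVector n f k.castSucc.succ = f (k + 1) := by
    simp [midVector, Fin.ext_iff, k.isLt.ne]
  rw [dotProduct, Fin.sum_univ_succ, Fin.sum_univ_castSucc, Fin.succ_last]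
  simp only [hmid, midVector_zero, midVector_last, zero_mul, zero_add, add_zero]
  rw [Fin.sum_univ_eq_sum_range (fun k ↦ f (k + 1) * g (k + 1)) n, Finset.range_eq_Ico,
    Finset.sum_Ico_add' (fun k ↦ f k * g k) 0 n 1]
  rfl

/-- The cycle `1 ↦ 2 ↦ ⋯ ↦ n + 1 ↦ 1`: position `j` of the diagonal of `α` carries the exponent
`m_{tailCycle n j}`. -/
def tailCycle (n : ℕ) : Equiv.Perm (Fin (n + 2)) :=
  Fin.cycleIcc 1 (Fin.last (n + 1))

lemma tailCycle_zero : tailCycle n 0 = 0 :=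
  Fin.cycleIcc_of_lt Fin.zero_lt_one

lemma tailCycle_last : tailCycle n (Fin.last (n + 1)) = 1 :=
  Fin.cycleIcc_of_last (Fin.le_last 1)

lemma val_tailCycle {j : Fin (n + 2)} (h0 : j ≠ 0) (hlast : j ≠ Fin.last (n + 1)) :
    (tailCycle n j : ℕ) = j + 1 := by
  have hlt : j < Fin.last (n + 1) := Fin.lt_last_iff_ne_last.2 hlast
  rw [tailCycle, Fin.cycleIcc_of_ge_of_lt (Fin.one_le_of_ne_zero h0) hlt,
    Fin.val_add_one_of_lt hlt]

variable {K : Type*} [Field K]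

/-- The matrix `α` over a field, with `π` in place of `q` and `e j` for the exponent `m_j`. -/
def alphaMatrix (n : ℕ) (π : K) (e : ℕ → ℤ) (a : ℕ → K) (b : K) :
    Matrix (Fin (n + 2)) (Fin (n + 2)) K :=
  Matrix.of fun i j ↦
    if i = 0 then
      (if j = 0 then π ^ (-(e 0))
       else if j = Fin.last (n + 1) then -π ^ (-(e 0) - e 1 + e 2) * b
       else -π ^ (-(e 0)) * a j.val)
    else if j = i then
      (if i = Fin.last (n + 1) then π ^ (-(e 1)) else π ^ (-(e (i.val + 1))))
    else 0

/-- The matrix `β` over a field, with `π` in place of `q` and `e j` for the exponent `m_j`. -/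
def betaMatrix (n : ℕ) (π : K) (e : ℕ → ℤ) (x : ℕ → K) (y : K) :
    Matrix (Fin (n + 2)) (Fin (n + 2)) K :=
  Matrix.of fun i j ↦
    if j = Fin.last (n + 1) then
      (if i = Fin.last (n + 1) then 1
       else if i = 0 then π ^ (-(e 1) + e 2) * y
       else π ^ (-(e 1) + e 2) * x i.val)
    else if i = j then 1 else 0

variable {π : K} {e : ℕ → ℤ}

lemma alphaMatrix_eq_diagonal_mul (hπ : π ≠ 0) (a : ℕ → K) (b : K) :
    alphaMatrix n π e a b =
      diagonal ((fun j : Fin (n + 2) ↦ π ^ (-(e j))) ∘ tailCycle n) *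
        (1 + vecMulVec (Pi.single 0 1)
          (midVector n (-a) + Pi.single (Fin.last (n + 1)) (-(π ^ (-(e 1) + e 2) * b)))) := by
  have hexp : π ^ (-(e 0) - e 1 + e 2) = π ^ (-(e 0)) * π ^ (-(e 1) + e 2) := by
    rw [← zpow_add₀ hπ]; congr 1; ring
  ext i j
  have hne : (0 : Fin (n + 2)) ≠ Fin.last (n + 1) := Fin.last_pos.ne
  rw [diagonal_mul, Function.comp_apply, alphaMatrix, Matrix.of_apply, Matrix.add_apply,
    vecMulVec_apply, Matrix.one_apply, Pi.add_apply, midVector]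
  rcases eq_or_ne i 0 with rfl | hi
  · rw [tailCycle_zero, hexp]
    rcases eq_or_ne j 0 with rfl | hj
    · simp [hne]
    rcases eq_or_ne j (Fin.last (n + 1)) with rfl | hj'
    · simp [hne, hne.symm, mul_assoc]
    · simp [hj, hj', hj.symm]
  · rcases eq_or_ne i (Fin.last (n + 1)) with rfl | hi'
    · simp [tailCycle_last, hne.symm, eq_comm]
    · simp [val_tailCycle hi hi', hi, hi', eq_comm]

lemma betaMatrix_eq_one_add (x : ℕ → K) (y : K) :
    betaMatrix n π e x y =
      1 + vecMulVec (midVector n (fun j ↦ π ^ (-(e 1) + e 2) * x j) +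
        Pi.single 0 (π ^ (-(e 1) + e 2) * y)) (Pi.single (Fin.last (n + 1)) 1) := by
  ext i j
  rw [betaMatrix, Matrix.of_apply, Matrix.add_apply, vecMulVec_apply, Matrix.one_apply,
    Pi.add_apply, midVector, Pi.single_apply, Pi.single_apply]
  grind

lemma zpow_neg_add_eq_inv_pow {k l : ℤ} {m : ℕ} (h : k = l + m) : π ^ (-k + l) = (π ^ m)⁻¹ := by
  rw [h, neg_add_rev, neg_add_cancel_right, _root_.zpow_neg, zpow_natCast]

lemma zpow_neg_comp_tailCycle_mul_mulSingle (hπ : π ≠ 0) :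
    (fun j : Fin (n + 2) ↦ π ^ (-(e j))) ∘ tailCycle n *
        (Pi.mulSingle 0 π⁻¹ * Pi.mulSingle (Fin.last (n + 1)) π) =
      (fun j : Fin (n + 2) ↦ if j = 0 then π ^ (-(e 0) - 1)
        else if j = 1 then π ^ (-(e 1) + 1) else π ^ (-(e j))) ∘ tailCycle n := by
  ext j
  rcases eq_or_ne j 0 with rfl | h0
  · simp [tailCycle_zero, zpow_sub_one₀ hπ, Fin.last_pos.ne]
  rcases eq_or_ne j (Fin.last (n + 1)) with rfl | hlast
  · simp [tailCycle_last, zpow_add_one₀ hπ, Fin.last_pos.ne']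
  · have hσ0 : tailCycle n j ≠ 0 :=
      fun h ↦ h0 ((tailCycle n).injective (h.trans tailCycle_zero.symm))
    have hσ1 : tailCycle n j ≠ 1 :=
      fun h ↦ hlast ((tailCycle n).injective (h.trans tailCycle_last.symm))
    simp [h0, hlast, hσ0, hσ1]

variable {R : Type*} [CommRing R] [Algebra R K]

lemma algebraMap_pow_toNat_mul_zpow_neg {ϖ : R} (hϖ : algebraMap R K ϖ ≠ 0) {k l : ℤ}
    (hkl : k ≤ l) :
    algebraMap R K (ϖ ^ (l - k).toNat) * algebraMap R K ϖ ^ (-l) = algebraMap R K ϖ ^ (-k) := by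
  rw [map_pow, ← zpow_natCast, Int.toNat_of_nonneg (sub_nonneg.2 hkl), ← zpow_add₀ hϖ]
  congr 1; ring

lemma integrallyEquiv_alphaMatrix_mul_betaMatrix {ϖ : R} (hϖ : algebraMap R K ϖ ≠ 0)
    (he : ∀ j, 2 ≤ j → j ≤ n + 1 → e j ≤ e 2) (a x : ℕ → R) (b y : R) :
    IntegrallyEquiv R
      (alphaMatrix n (algebraMap R K ϖ) e (algebraMap R K ∘ a) (algebraMap R K b) *
        betaMatrix n (algebraMap R K ϖ) e (algebraMap R K ∘ x) (algebraMap R K y))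
      (diagonal ((fun j : Fin (n + 2) ↦ algebraMap R K ϖ ^ (-(e j))) ∘ tailCycle n) *
        transvection 0 (Fin.last (n + 1)) (algebraMap R K ϖ ^ (-(e 1) + e 2) *
          algebraMap R K (y - ((∑ j ∈ Finset.Icc 1 n, a j * x j) + b)))) := by
  set π : K := algebraMap R K ϖ
  set κ : ℤ := -(e 1) + e 2
  have hδ (j : Fin (n + 2)) :
      ((fun j : Fin (n + 2) ↦ π ^ (-(e j))) ∘ tailCycle n) j *
          midVector n (fun j ↦ π ^ κ * algebraMap R K (x j)) j =
        algebraMap R K (midVector n (fun j ↦ ϖ ^ (e 2 - e (j + 1)).toNat * x j) j) *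
          ((fun j : Fin (n + 2) ↦ π ^ (-(e j))) ∘ tailCycle n) (Fin.last (n + 1)) := by
    by_cases hj : j = 0 ∨ j = Fin.last (n + 1)
    · simp [midVector, hj]
    · rw [not_or] at hj
      have h1j : 1 ≤ (j : ℕ) := Nat.one_le_iff_ne_zero.2 (Fin.val_ne_zero_iff.2 hj.1)
      have hjn : (j : ℕ) < n + 1 := Fin.val_lt_last hj.2
      have hκ : π ^ (-(e 2)) * π ^ κ = π ^ (-(e 1)) := by
        rw [← zpow_add₀ hϖ]; congr 1; simp only [κ]; ring
      have hpow := algebraMap_pow_toNat_mul_zpow_neg hϖ (he (j + 1) (by omega) (by omega))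
      simp only [Function.comp_apply, val_tailCycle hj.1 hj.2, tailCycle_last, midVector, hj,
        or_self, if_false, map_mul, Fin.val_one]
      rw [← hpow, ← hκ]
      ring
  convert integrallyEquiv_diagonal_mul_row_mul_col Fin.last_pos.ne (midVector_zero (-a))
    (midVector_last _) (midVector_last _) hδ (-(π ^ κ * algebraMap R K b))
    (π ^ κ * algebraMap R K y) using 1
  · have comp_neg : algebraMap R K ∘ (-a) = -(algebraMap R K ∘ a) := by ext; simp
    rw [alphaMatrix_eq_diagonal_mul hϖ, betaMatrix_eq_one_add, Matrix.mul_assoc, comp_midVector,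
      comp_neg]
    rfl
  · rw [comp_midVector, midVector_dotProduct_midVector]
    simp only [Function.comp_apply, Pi.neg_apply, map_neg, map_sub, map_add, map_sum, map_mul]
    congr 2
    simp only [mul_sub, mul_add, Finset.mul_sum, neg_mul, Finset.sum_neg_distrib,
      mul_left_comm (π ^ κ)]
    ring

lemma integrallyEquiv_alphaMatrix_mul_betaMatrix_of_pow_dvd {ϖ : R} (hϖ : algebraMap R K ϖ ≠ 0)
    (he : ∀ j, 2 ≤ j → j ≤ n + 1 → e j ≤ e 2) {m : ℕ} (hme : e 1 = e 2 + m)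
    {a x : ℕ → R} {b y : R} (hw : ϖ ^ m ∣ y - ((∑ j ∈ Finset.Icc 1 n, a j * x j) + b)) :
    IntegrallyEquiv R
      (alphaMatrix n (algebraMap R K ϖ) e (algebraMap R K ∘ a) (algebraMap R K b) *
        betaMatrix n (algebraMap R K ϖ) e (algebraMap R K ∘ x) (algebraMap R K y))
      (diagonal fun j : Fin (n + 2) ↦ algebraMap R K ϖ ^ (-(e j))) := by
  obtain ⟨z, hz⟩ := hw
  have corner : algebraMap R K ϖ ^ (-(e 1) + e 2) * algebraMap R K (ϖ ^ m * z) =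
      algebraMap R K z := by
    rw [zpow_neg_add_eq_inv_pow hme, map_mul, map_pow, inv_mul_cancel_left₀ (pow_ne_zero m hϖ)]
  have reduction := integrallyEquiv_alphaMatrix_mul_betaMatrix hϖ he a x b y
  rw [hz, corner] at reduction
  exact (reduction.trans
    (integrallyEquiv_diagonal_mul_transvection_algebraMap Fin.last_pos.ne _ z)).trans
    (integrallyEquiv_diagonal_comp_perm _ _)

lemma integrallyEquiv_alphaMatrix_mul_betaMatrix_of_pow_dvd_sub {ϖ : R}
    (hϖ : algebraMap R K ϖ ≠ 0) (hϖ' : ϖ ∈ Ideal.jacobson (⊥ : Ideal R)) (h01 : e 1 ≤ e 0)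
    (he : ∀ j, 2 ≤ j → j ≤ n + 1 → e j ≤ e 2) {m : ℕ} (hm : 1 ≤ m) (hme : e 1 = e 2 + m)
    {a x : ℕ → R} {b y : R}
    (hw : ϖ ^ m ∣ y - ((∑ j ∈ Finset.Icc 1 n, a j * x j) + b) - ϖ ^ (m - 1)) :
    IntegrallyEquiv R
      (alphaMatrix n (algebraMap R K ϖ) e (algebraMap R K ∘ a) (algebraMap R K b) *
        betaMatrix n (algebraMap R K ϖ) e (algebraMap R K ∘ x) (algebraMap R K y))
      (diagonal fun j : Fin (n + 2) ↦
        if j = 0 then algebraMap R K ϖ ^ (-(e 0) - 1)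
        else if j = 1 then algebraMap R K ϖ ^ (-(e 1) + 1)
        else algebraMap R K ϖ ^ (-(e j))) := by
  obtain ⟨z, hz⟩ := hw
  obtain ⟨k, rfl⟩ := Nat.exists_eq_add_of_le' hm
  have corner : algebraMap R K ϖ ^ (-(e 1) + e 2) *
      algebraMap R K (y - ((∑ j ∈ Finset.Icc 1 n, a j * x j) + b)) =
        algebraMap R K (ϖ * z + 1) * (algebraMap R K ϖ)⁻¹ := by
    rw [zpow_neg_add_eq_inv_pow hme, sub_eq_iff_eq_add.1 hz, Nat.add_sub_cancel]
    simp only [map_add, map_mul, map_pow, map_one]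
    field_simp
    ring
  have reduction := integrallyEquiv_alphaMatrix_mul_betaMatrix hϖ he a x b y
  rw [corner] at reduction
  have exponents : ((fun j : Fin (n + 2) ↦ algebraMap R K ϖ ^ (-(e j))) ∘ tailCycle n)
      (Fin.last (n + 1)) = algebraMap R K (ϖ ^ (e 0 - e 1).toNat) *
        ((fun j : Fin (n + 2) ↦ algebraMap R K ϖ ^ (-(e j))) ∘ tailCycle n) 0 := by
    rw [Function.comp_apply, Function.comp_apply, tailCycle_last, tailCycle_zero]
    exact (algebraMap_pow_toNat_mul_zpow_neg hϖ h01).symm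
  have shifted := reduction.trans (integrallyEquiv_diagonal_mul_transvection_unit_mul
    Fin.last_pos.ne (mul_inv_cancel₀ hϖ) exponents (Ideal.mem_jacobson_bot.1 hϖ' z))
  rw [zpow_neg_comp_tailCycle_mul_mulSingle hϖ] at shifted
  exact shifted.trans (integrallyEquiv_diagonal_comp_perm _ _)

end BorderedMatrices

lemma natCast_prime_mem_jacobson_bot (q : ℕ) [Fact q.Prime] :
    (q : ℤ_[q]) ∈ Ideal.jacobson (⊥ : Ideal ℤ_[q]) := by
  rw [IsLocalRing.jacobson_eq_maximalIdeal ⊥ bot_ne_top]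
  exact PadicInt.prime_p.not_isUnit

theorem statement10_general {R K : Type*} [CommRing R] [Field K] [Algebra R K] {ϖ : R}
    (hϖ : algebraMap R K ϖ ≠ 0) (hϖ' : ϖ ∈ Ideal.jacobson (⊥ : Ideal R)) (n : ℕ) (e : ℕ → ℤ)
    (h01 : e 1 ≤ e 0) (he : ∀ j, 2 ≤ j → j ≤ n + 1 → e j ≤ e 2)
    (m : ℕ) (hm : 1 ≤ m) (hme : e 1 = e 2 + m) (a x : ℕ → R) (b y w : R)
    (hw : w = y - ((∑ j ∈ Finset.Icc 1 n, a j * x j) + b))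
    (α β : Matrix (Fin (n + 2)) (Fin (n + 2)) K)
    (hα : α = alphaMatrix n (algebraMap R K ϖ) e (algebraMap R K ∘ a) (algebraMap R K b))
    (hβ : β = betaMatrix n (algebraMap R K ϖ) e (algebraMap R K ∘ x) (algebraMap R K y)) :
    (ϖ ^ m ∣ w →
      IntegrallyEquiv R (α * β)
        (diagonal fun j : Fin (n + 2) ↦ algebraMap R K ϖ ^ (-(e j)))) ∧
    (ϖ ^ m ∣ w - ϖ ^ (m - 1) →
      IntegrallyEquiv R (α * β)
        (diagonal fun j : Fin (n + 2) ↦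
          if j = 0 then algebraMap R K ϖ ^ (-(e 0) - 1)
          else if j = 1 then algebraMap R K ϖ ^ (-(e 1) + 1)
          else algebraMap R K ϖ ^ (-(e j)))) := by
  subst hw hα hβ
  exact ⟨integrallyEquiv_alphaMatrix_mul_betaMatrix_of_pow_dvd hϖ he hme,
    integrallyEquiv_alphaMatrix_mul_betaMatrix_of_pow_dvd_sub hϖ hϖ' h01 he hm hme⟩

theorem statement10 (q : ℕ) [Fact q.Prime] (n : ℕ) (hn : 1 ≤ n)
    -- the exponents m₀ ≥ m₁ ≥ … ≥ m_{n+1}, here `e 0, e 1, …, e (n+1)`, with m₁ > m₂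
    (e : ℕ → ℤ) (he : ∀ j, j ≤ n → e (j + 1) ≤ e j) (h12 : e 2 < e 1)
    -- m := m₁ - m₂ ≥ 1
    (m : ℕ) (hm : 1 ≤ m) (hme : e 1 = e 2 + m)
    (a x : ℕ → ℤ_[q]) (b y : ℤ_[q])
    (w : ℤ_[q]) (hw : w = y - ((∑ j ∈ Finset.Icc 1 n, a j * x j) + b))
    (α β : Matrix (Fin (n + 2)) (Fin (n + 2)) ℚ_[q])
    (hα : α = Matrix.of fun i j =>
      if i = 0 then
        (if j = 0 then (q : ℚ_[q]) ^ (-(e 0))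
         else if j = Fin.last (n + 1) then -(q : ℚ_[q]) ^ (-(e 0) - e 1 + e 2) * (b : ℚ_[q])
         else -(q : ℚ_[q]) ^ (-(e 0)) * (a j.val : ℚ_[q]))
      else if j = i then
        (if i = Fin.last (n + 1) then (q : ℚ_[q]) ^ (-(e 1))
         else (q : ℚ_[q]) ^ (-(e (i.val + 1))))
      else 0)
    (hβ : β = Matrix.of fun i j =>
      if j = Fin.last (n + 1) then
        (if i = Fin.last (n + 1) then 1
         else if i = 0 then (q : ℚ_[q]) ^ (-(e 1) + e 2) * (y : ℚ_[q])
         else (q : ℚ_[q]) ^ (-(e 1) + e 2) * (x i.val : ℚ_[q]))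
      else if i = j then 1 else 0) :
    -- (i) Smith normal form with diagonal `q^{-m₀}, q^{-m₁}, …, q^{-m_{n+1}}`
    ((∃ z : ℤ_[q], w = (q : ℤ_[q]) ^ m * z) →
      ∃ k₁ k₂ : Matrix (Fin (n + 2)) (Fin (n + 2)) ℤ_[q],
        IsUnit k₁.det ∧ IsUnit k₂.det ∧
        α * β =
          (k₁.map fun z : ℤ_[q] => (z : ℚ_[q])) *
            Matrix.diagonal (fun i : Fin (n + 2) => (q : ℚ_[q]) ^ (-(e i.val))) *
            (k₂.map fun z : ℤ_[q] => (z : ℚ_[q]))) ∧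
    -- (ii) Smith normal form with diagonal `q^{-m₀-1}, q^{-m₁+1}, q^{-m₂}, …, q^{-m_{n+1}}`
    ((∃ z : ℤ_[q], w - (q : ℤ_[q]) ^ (m - 1) = (q : ℤ_[q]) ^ m * z) →
      ∃ k₁ k₂ : Matrix (Fin (n + 2)) (Fin (n + 2)) ℤ_[q],
        IsUnit k₁.det ∧ IsUnit k₂.det ∧
        α * β =
          (k₁.map fun z : ℤ_[q] => (z : ℚ_[q])) *
            Matrix.diagonal (fun i : Fin (n + 2) =>
              if i = 0 then (q : ℚ_[q]) ^ (-(e 0) - 1)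
              else if i = 1 then (q : ℚ_[q]) ^ (-(e 1) + 1)
              else (q : ℚ_[q]) ^ (-(e i.val))) *
            (k₂.map fun z : ℤ_[q] => (z : ℚ_[q]))) := by
  have hq : algebraMap ℤ_[q] ℚ_[q] q ≠ 0 := by simpa using NeZero.ne (q : ℚ_[q])
  have he' : AntitoneOn e (Set.Iic (n + 1)) :=
    antitoneOn_of_add_one_le Set.ordConnected_Iic
      fun j _ _ hj ↦ he j (Nat.le_of_succ_le_succ hj)
  exact statement10_general hq (natCast_prime_mem_jacobson_bot q) n e (he 0 n.zero_le)
    (fun _ h2j hjn ↦ he' (h2j.trans hjn) hjn h2j) m hm hme a x b y w hw α β hα hβ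
end
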